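/- arXiv:1801.02979 — 2 statements merged into one kernel-verified Lean document; each statement's English description precedes it below -/
import Mathlib

section
/- Let 1 ≤ k ≤ L be integers, λ > 0, and let u be a solution of the mean-field ODE system taking values in Ū with u(0) ∈ U. Then u(t) ∈ U for all t ≥ 0, and moreover v_1(u(t)) ≤ exp(λkt)·(1 + v_1(u(0))). -/
open Finset Set

/-- The polynomial `f ≡ f^{(L,k)}` from the paper. -/
noncomputable def fLk (L k : ℕ) (x : ℝ) : ℝ :=
  ∑ i ∈ Finset.Icc 1 k,
    (L.choose (L - k + i) : ℝ) * ((L - k + i - 2).choose (i - 1) : ℝ) *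
      (-1 : ℝ) ^ (i - 1) * x ^ (L - k + i)

/-- Membership in `Ū`: real sequences with `1 = u_0 ≥ u_1 ≥ … ≥ 0`. -/
def InUbar (u : ℕ → ℝ) : Prop :=
  u 0 = 1 ∧ (∀ j, u (j + 1) ≤ u j) ∧ (∀ j, 0 ≤ u j)

/-- A `Ū`-valued solution of the mean-field ODE system with initial condition `g`. -/
def IsMFSol (L k : ℕ) (lam : ℝ) (g : ℕ → ℝ) (u : ℝ → ℕ → ℝ) : Prop :=
  (∀ j, u 0 j = g j) ∧
  (∀ t ∈ Set.Ici (0 : ℝ), InUbar (u t)) ∧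
  (∀ j, 1 ≤ j → ∀ t ∈ Set.Ici (0 : ℝ),
    HasDerivWithinAt (fun τ => u τ j)
      (lam * (fLk L k (u t (j - 1)) - fLk L k (u t j)) - k * (u t j - u t (j + 1)))
      (Set.Ici (0 : ℝ)) t)

/-!
Write `d = L - k`. The polynomial `f` is `x ↦ E[(X - d)⁺]` for `X ∼ Bin(L, x)`, expanded in powers
of `x` by Newton's forward difference formula: the coefficient of `x ^ n` is `L.choose n` times the
`n`-th difference at `0` of `j ↦ (j - d)⁺`. Hence `f ≥ 0` on `[0, 1]` and `f(1) = k`. Summing the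
equations over `1 ≤ j ≤ n` telescopes to
`(u_1 + ⋯ + u_n)' = λ (f(1) - f(u_n)) - k (u_1 - u_{n+1}) ≤ λ k`,
so `v_1` grows at most linearly, at rate `λ k`.
-/

section BinomialMean

open fwdDiff

variable {R : Type*} [CommRing R]

/-- The mean `E[φ X]` for `X ∼ Bin(L, x)`, as a Bernstein sum; `x` ranges over a commutative ring
because the expansion in powers of `x` is a formal identity. -/
def binomialMean (x : R) (L : ℕ) (φ : ℕ → R) : R :=
  ∑ ij ∈ antidiagonal L, (L.choose ij.1 : R) * (x ^ ij.1 * (1 - x) ^ ij.2 * φ ij.1)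

lemma binomialMean_succ (x : R) (L : ℕ) (φ : ℕ → R) :
    binomialMean x (L + 1) φ = binomialMean x L φ + x * binomialMean x L (Δ_[1] φ) := by
  simp only [binomialMean]
  rw [Finset.sum_antidiagonal_choose_succ_mul fun i j => x ^ i * (1 - x) ^ j * φ i,
    Finset.mul_sum, ← Finset.sum_add_distrib, ← Finset.sum_add_distrib]
  refine Finset.sum_congr rfl fun ij hij => ?_
  rw [Nat.choose_symm_of_eq_add (mem_antidiagonal.mp hij).symm, fwdDiff]
  ring

lemma binomialMean_eq_sum_fwdDiff_iter (x : R) (L : ℕ) (φ : ℕ → R) :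
    binomialMean x L φ =
      ∑ n ∈ Finset.range (L + 1), (L.choose n : R) * ((Δ_[1])^[n] φ 0 * x ^ n) := by
  rw [← Finset.Nat.sum_antidiagonal_eq_sum_range_succ_mk
    (fun ij : ℕ × ℕ => (L.choose ij.1 : R) * ((Δ_[1])^[ij.1] φ 0 * x ^ ij.1)) L]
  induction L generalizing φ with
  | zero => simp [binomialMean]
  | succ L ih =>
    rw [binomialMean_succ, ih, ih,
      Finset.sum_antidiagonal_choose_succ_mul fun i _ => (Δ_[1])^[i] φ 0 * x ^ i, Finset.mul_sum]
    congr 1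
    refine Finset.sum_congr rfl fun ij hij => ?_
    rw [Nat.choose_symm_of_eq_add (mem_antidiagonal.mp hij).symm,
      Function.iterate_succ_apply]
    ring

lemma binomialMean_one (L : ℕ) (φ : ℕ → R) : binomialMean 1 L φ = φ L := by
  rw [binomialMean, Finset.Nat.sum_antidiagonal_eq_sum_range_succ_mk, Finset.sum_range_succ,
    Finset.sum_eq_zero]
  · simp
  · intro i hi
    simp [Nat.sub_ne_zero_of_lt (Finset.mem_range.mp hi)]

lemma binomialMean_nonneg [PartialOrder R] [IsOrderedRing R] {x : R} (hx₀ : 0 ≤ x) (hx₁ : x ≤ 1)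
    (L : ℕ) {φ : ℕ → R} (hφ : ∀ j, 0 ≤ φ j) : 0 ≤ binomialMean x L φ :=
  Finset.sum_nonneg fun _ _ => mul_nonneg (Nat.cast_nonneg _) <|
    mul_nonneg (mul_nonneg (pow_nonneg hx₀ _) (pow_nonneg (sub_nonneg.2 hx₁) _)) (hφ _)

end BinomialMean

section PositivePart

open fwdDiff

variable {R : Type*} [Ring R]

lemma fwdDiff_iter_ite_eq (d n : ℕ) :
    (Δ_[1])^[n] (fun j => if j = d then (1 : R) else 0) 0 = (-1) ^ (n - d) * (n.choose d : R) := by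
  rw [fwdDiff_iter_eq_sum_shift]
  rcases le_or_gt d n with hdn | hnd
  · simp [Nat.lt_succ_of_le hdn]
  · simp [Nat.choose_eq_zero_of_lt hnd, hnd.not_ge]

lemma fwdDiff_natCast_sub (d : ℕ) :
    Δ_[1] (fun j : ℕ => ((j - d : ℕ) : R)) = fun j => if d ≤ j then 1 else 0 := by
  funext j
  rw [fwdDiff]
  split_ifs with hdj
  · rw [Nat.sub_add_comm hdj]
    simp
  · rw [Nat.sub_eq_zero_of_le (by lia), Nat.sub_eq_zero_of_le (by lia), sub_self]

lemma fwdDiff_ite_succ_le (d : ℕ) :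
    Δ_[1] (fun j : ℕ => if d + 1 ≤ j then (1 : R) else 0) = fun j => if j = d then 1 else 0 := by
  funext j
  simp only [fwdDiff]
  grind

lemma fwdDiff_iter_natCast_sub_eq_zero {d n : ℕ} (hnd : n ≤ d) :
    (Δ_[1])^[n] (fun j : ℕ => ((j - d : ℕ) : R)) 0 = 0 := by
  rw [fwdDiff_iter_eq_sum_shift]
  refine Finset.sum_eq_zero fun j hj => ?_
  have hjd : j - d = 0 := by grind
  simp [hjd]

/-- For `d = 0` and `i ≥ 1` both sides vanish; there the truncated subtraction gives
`(i - 1).choose i = 0`. -/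
lemma fwdDiff_iter_natCast_sub (d i : ℕ) :
    (Δ_[1])^[d + i + 1] (fun j : ℕ => ((j - d : ℕ) : R)) 0 =
      (-1) ^ i * ((d + i - 1).choose i : R) := by
  rw [Function.iterate_succ_apply, fwdDiff_natCast_sub]
  rcases d with _ | d
  · rcases i with _ | i
    · simp
    · rw [Nat.zero_add, Function.iterate_succ_apply]
      simp [fwdDiff_iter_eq_sum_shift]
  · rw [Nat.add_right_comm, Function.iterate_succ_apply, fwdDiff_ite_succ_le,
      fwdDiff_iter_ite_eq, Nat.add_sub_cancel_left, Nat.add_sub_cancel, Nat.choose_symm_add]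

end PositivePart

lemma fLk_eq_binomialMean {L k : ℕ} (hkL : k ≤ L) (x : ℝ) :
    fLk L k x = binomialMean x L fun j => ((j - (L - k) : ℕ) : ℝ) := by
  obtain ⟨d, rfl⟩ := Nat.exists_eq_add_of_le' hkL
  rw [fLk, Nat.add_sub_cancel, binomialMean_eq_sum_fwdDiff_iter, Nat.add_right_comm d k 1,
    Finset.sum_range_add, Finset.sum_eq_zero (s := Finset.range (d + 1)), zero_add,
    ← Finset.Ico_add_one_right_eq_Icc, Finset.sum_Ico_eq_sum_range, Nat.add_sub_cancel]
  · refine Finset.sum_congr rfl fun i _ => ?_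
    rw [Nat.add_right_comm d 1 i, fwdDiff_iter_natCast_sub, show d + (1 + i) = d + i + 1 by ring,
      Nat.add_sub_cancel_left, Nat.add_sub_add_right _ 1 1]
    ring
  · intro n hn
    rw [fwdDiff_iter_natCast_sub_eq_zero (Finset.mem_range_succ_iff.mp hn), zero_mul, mul_zero]

lemma fLk_nonneg {L k : ℕ} (hkL : k ≤ L) {x : ℝ} (hx₀ : 0 ≤ x) (hx₁ : x ≤ 1) : 0 ≤ fLk L k x := by
  rw [fLk_eq_binomialMean hkL]
  exact binomialMean_nonneg hx₀ hx₁ L fun _ => Nat.cast_nonneg _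

lemma fLk_one {L k : ℕ} (hkL : k ≤ L) : fLk L k 1 = k := by
  rw [fLk_eq_binomialMean hkL, binomialMean_one, Nat.sub_sub_self hkL]

lemma InUbar.antitone {v : ℕ → ℝ} (hv : InUbar v) : Antitone v :=
  antitone_nat_of_succ_le hv.2.1

lemma InUbar.le_one {v : ℕ → ℝ} (hv : InUbar v) (j : ℕ) : v j ≤ 1 :=
  hv.1 ▸ hv.antitone (Nat.zero_le j)

/-- A `Ū`-valued solution of `u_j' = F(u_{j-1}) - F(u_j) - μ (u_j - u_{j+1})`, `j ≥ 1`: the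
mean-field system with an arbitrary arrival flux `F`, in which the factor `λ` is absorbed, and
service rate `μ`. The equation for `u_j` is indexed by `j - 1`, so that no truncated subtraction
occurs. -/
structure IsFluxSol (F : ℝ → ℝ) (μ : ℝ) (u : ℝ → ℕ → ℝ) : Prop where
  inUbar : ∀ t ∈ Set.Ici (0 : ℝ), InUbar (u t)
  hasDerivWithinAt : ∀ j, ∀ t ∈ Set.Ici (0 : ℝ), HasDerivWithinAt (fun τ => u τ (j + 1))
    (F (u t j) - F (u t (j + 1)) - μ * (u t (j + 1) - u t (j + 2))) (Set.Ici 0) t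

namespace IsFluxSol

variable {F : ℝ → ℝ} {μ : ℝ} {u : ℝ → ℕ → ℝ}

lemma hasDerivWithinAt_sum_range (hu : IsFluxSol F μ u) (n : ℕ) {t : ℝ}
    (ht : t ∈ Set.Ici (0 : ℝ)) :
    HasDerivWithinAt (fun τ => ∑ i ∈ Finset.range n, u τ (i + 1))
      (F 1 - F (u t n) - μ * (u t 1 - u t (n + 1))) (Set.Ici 0) t := by
  have telescope : ∑ i ∈ Finset.range n,
      (F (u t i) - F (u t (i + 1)) - μ * (u t (i + 1) - u t (i + 2))) =
        F 1 - F (u t n) - μ * (u t 1 - u t (n + 1)) := by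
    rw [Finset.sum_sub_distrib, ← Finset.mul_sum, Finset.sum_range_sub' fun i => F (u t i),
      Finset.sum_range_sub' fun i => u t (i + 1), (hu.inUbar t ht).1]
  exact telescope ▸ HasDerivWithinAt.fun_sum fun i _ => hu.hasDerivWithinAt i t ht

lemma sum_range_le (hu : IsFluxSol F μ u) (hF : ∀ x ∈ Set.Icc (0 : ℝ) 1, 0 ≤ F x) (hμ : 0 ≤ μ)
    (n : ℕ) {t : ℝ} (ht : 0 ≤ t) :
    ∑ i ∈ Finset.range n, u t (i + 1) ≤ (∑ i ∈ Finset.range n, u 0 (i + 1)) + F 1 * t := by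
  have hderiv (s : ℝ) (hs : s ∈ Set.Ici (0 : ℝ)) := (hu.hasDerivWithinAt_sum_range n hs).sub
    ((hasDerivWithinAt_id s (Set.Ici (0 : ℝ))).const_mul (F 1))
  have hanti : AntitoneOn (fun τ => ∑ i ∈ Finset.range n, u τ (i + 1) - F 1 * τ)
      (Set.Ici (0 : ℝ)) := by
    refine antitoneOn_of_hasDerivWithinAt_nonpos (convex_Ici 0)
      (fun s hs => (hderiv s hs).continuousWithinAt)
      (fun s hs => (hderiv s (interior_subset hs)).mono interior_subset) fun s hs => ?_
    have hU := hu.inUbar s (interior_subset hs)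
    have hflux : 0 ≤ F (u s n) := hF _ ⟨hU.2.2 n, hU.le_one n⟩
    have hservice : 0 ≤ μ * (u s 1 - u s (n + 1)) :=
      mul_nonneg hμ (sub_nonneg.2 (hU.antitone (by lia)))
    linarith
  have hdecrease := hanti Set.self_mem_Ici ht ht
  linarith

theorem summable_and_tsum_le (hu : IsFluxSol F μ u) (hF : ∀ x ∈ Set.Icc (0 : ℝ) 1, 0 ≤ F x)
    (hμ : 0 ≤ μ) (hsum : Summable fun i => u 0 (i + 1)) {t : ℝ} (ht : 0 ≤ t) :
    Summable (fun i => u t (i + 1)) ∧ ∑' i, u t (i + 1) ≤ (∑' i, u 0 (i + 1)) + F 1 * t := by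
  have hnonneg : ∀ s ∈ Set.Ici (0 : ℝ), ∀ i, 0 ≤ u s (i + 1) := fun s hs i =>
    (hu.inUbar s hs).2.2 (i + 1)
  have hpartial (n : ℕ) :
      ∑ i ∈ Finset.range n, u t (i + 1) ≤ (∑' i, u 0 (i + 1)) + F 1 * t := by
    grw [hu.sum_range_le hF hμ n ht,
      hsum.sum_le_tsum (Finset.range n) fun i _ => hnonneg 0 Set.self_mem_Ici i]
  exact ⟨summable_of_sum_range_le (hnonneg t ht) hpartial,
    Real.tsum_le_of_sum_range_le (hnonneg t ht) hpartial⟩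

end IsFluxSol

lemma add_le_exp_mul_one_add {a x : ℝ} (ha : 0 ≤ a) (hx : 0 ≤ x) :
    a + x ≤ Real.exp x * (1 + a) := by
  have hexp := Real.add_one_le_exp x
  have hmul : a ≤ Real.exp x * a := le_mul_of_one_le_left ha (Real.one_le_exp hx)
  linarith

lemma IsMFSol.isFluxSol {L k : ℕ} {lam : ℝ} {g : ℕ → ℝ} {u : ℝ → ℕ → ℝ}
    (hu : IsMFSol L k lam g u) : IsFluxSol (fun x => lam * fLk L k x) k u where
  inUbar := hu.2.1
  hasDerivWithinAt j t ht := by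
    simpa only [Nat.add_sub_cancel, mul_sub] using hu.2.2 (j + 1) (Nat.le_add_left 1 j) t ht

theorem mfSol_stays_in_U_general {L k : ℕ} (hkL : k ≤ L) {lam : ℝ} (hlam : 0 ≤ lam) {g : ℕ → ℝ}
    {u : ℝ → ℕ → ℝ} (hu : IsMFSol L k lam g u) (hg : Summable fun i => u 0 (i + 1)) {t : ℝ}
    (ht : 0 ≤ t) :
    Summable (fun i => u t (i + 1)) ∧
      ∑' i, u t (i + 1) ≤ (∑' i, u 0 (i + 1)) + lam * k * t := by
  simpa only [fLk_one hkL] using hu.isFluxSol.summable_and_tsum_le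
    (fun x hx => mul_nonneg hlam (fLk_nonneg hkL hx.1 hx.2)) k.cast_nonneg hg ht

/-- Lemma 5.5: if a `Ū`-valued solution `u` of the mean-field ODE system
starts in `U`, i.e. `v_1(u(0)) = ∑_{i≥1} u_i(0) < ∞`, then `u(t) ∈ U` for all `t ≥ 0` and
`v_1(u(t)) ≤ exp(λkt)·(1 + v_1(u(0)))`. -/
theorem mfSol_stays_in_U (L k : ℕ) (hk : 1 ≤ k) (hkL : k ≤ L)
    (lam : ℝ) (hlam : 0 < lam) (g : ℕ → ℝ) (u : ℝ → ℕ → ℝ)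
    (hu : IsMFSol L k lam g u)
    (hg : Summable (fun i : ℕ => u 0 (i + 1))) :
    ∀ t ∈ Set.Ici (0 : ℝ), Summable (fun i : ℕ => u t (i + 1)) ∧
      (∑' i : ℕ, u t (i + 1)) ≤ Real.exp (lam * k * t) * (1 + ∑' i : ℕ, u 0 (i + 1)) := by
  intro t ht
  refine (mfSol_stays_in_U_general hkL hlam.le hu hg ht).imp_right fun h => h.trans ?_
  exact add_le_exp_mul_one_add (tsum_nonneg fun i => (hu.2.1 0 Set.self_mem_Ici).2.2 (i + 1))
    (mul_nonneg (by positivity) ht)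
end

section
/- Let 1 ≤ k ≤ L be integers, λ > 0, and let u^{(1)} and u^{(2)} be solutions of the mean-field ODE system taking values in Ū with u^{(1)}_j(0) ≥ u^{(2)}_j(0) for all j ≥ 0. Then u^{(1)}_j(t) ≥ u^{(2)}_j(t) for all j ≥ 0 and all t ≥ 0. -/
open Finset Set

/-!
The difference `d = u - v` of two solutions of the mean-field system satisfies, wherever `d_j > 0`,
the differential inequality `d_j' ≤ C * sup_i d_i⁺`: monotonicity of `f` discards the outflow
terms, and its Lipschitz continuity controls the inflow terms. Weighting by `exp ((2|C| + 1) t)`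
turns this inequality into a contraction: any bound `S * exp ((2|C| + 1) t)` valid for all `d_j`
improves to half of itself, so no `d_j` is ever positive.

For `f = f^{(L,k)}` with `k < L`, monotonicity on `[0, 1]` follows from `f'(0) = 0` and the fact
that `f''` is `L (L - 1)` times the Bernstein polynomial of degree `L - 2` and index `L - k - 1`.
-/

section Comparison

variable {ι : Type*} {a b B C K S : ℝ} {d d' : ι → ℝ → ℝ}

theorem le_half_mul_exp_of_le_mul_exp (hS : 0 < S) (hK : 2 * C < K)
    (hcont : ∀ j, ContinuousOn (d j) (Icc a b))
    (hderiv : ∀ j, ∀ t ∈ Ico a b, HasDerivWithinAt (d j) (d' j t) (Ici t) t)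
    (ha : ∀ j, d j a ≤ 0)
    (hd' : ∀ t ∈ Ico a b, ∀ p, (∀ i, d i t ≤ p) → ∀ j, 0 < d j t → d' j t ≤ C * p)
    (hle : ∀ j, ∀ t ∈ Icc a b, d j t ≤ S * Real.exp (K * (t - a))) :
    ∀ j, ∀ t ∈ Icc a b, d j t ≤ S / 2 * Real.exp (K * (t - a)) := by
  intro j t ht
  have hfence : ∀ x, HasDerivAt (fun τ => S / 2 * Real.exp (K * (τ - a)))
      (S / 2 * (Real.exp (K * (x - a)) * K)) x := fun x =>
    ((((hasDerivAt_id x).sub_const a).const_mul K).exp.const_mul (S / 2)).congr_deriv (by simp)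
  refine image_le_of_deriv_right_lt_deriv_boundary (hcont j) (hderiv j)
    ((ha j).trans (by positivity)) hfence (fun x hx hcross => ?_) ht
  have hpos : 0 < d j x := hcross ▸ by positivity
  have hE : 0 < S * Real.exp (K * (x - a)) := by positivity
  calc d' j x ≤ C * (S * Real.exp (K * (x - a))) :=
        hd' x hx _ (fun i => hle i x (Ico_subset_Icc_self hx)) j hpos
    _ < K / 2 * (S * Real.exp (K * (x - a))) :=
        mul_lt_mul_of_pos_right (by linarith) hE
    _ = S / 2 * (Real.exp (K * (x - a)) * K) := by ring

theorem nonpos_of_deriv_right_le_mul_bound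
    (hcont : ∀ j, ContinuousOn (d j) (Icc a b))
    (hderiv : ∀ j, ∀ t ∈ Ico a b, HasDerivWithinAt (d j) (d' j t) (Ici t) t)
    (ha : ∀ j, d j a ≤ 0)
    (hd' : ∀ t ∈ Ico a b, ∀ p, (∀ i, d i t ≤ p) → ∀ j, 0 < d j t → d' j t ≤ C * p)
    (hbdd : ∀ j, ∀ t ∈ Icc a b, d j t ≤ B) :
    ∀ j, ∀ t ∈ Icc a b, d j t ≤ 0 := by
  have hiter : ∀ n : ℕ, ∀ j, ∀ t ∈ Icc a b,
      d j t ≤ (max B 1) / 2 ^ n * Real.exp ((2 * |C| + 1) * (t - a)) := by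
    intro n
    induction n with
    | zero =>
      intro j t ht
      have hexp : 1 ≤ Real.exp ((2 * |C| + 1) * (t - a)) :=
        Real.one_le_exp (mul_nonneg (by positivity) (sub_nonneg.2 ht.1))
      calc d j t ≤ max B 1 := (hbdd j t ht).trans (le_max_left B 1)
        _ ≤ max B 1 / 2 ^ 0 * Real.exp ((2 * |C| + 1) * (t - a)) := by
          rw [pow_zero, div_one]
          exact le_mul_of_one_le_right (by positivity) hexp
    | succ n ih =>
      rw [pow_succ, ← div_div]
      exact le_half_mul_exp_of_le_mul_exp (by positivity) (by linarith [le_abs_self C])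
        hcont hderiv ha hd' ih
  intro j t ht
  have hlim := ((tendsto_const_nhds (x := max B 1)).div_atTop
    (tendsto_pow_atTop_atTop_of_one_lt (one_lt_two (α := ℝ)))).mul_const
      (Real.exp ((2 * |C| + 1) * (t - a)))
  rw [zero_mul] at hlim
  exact ge_of_tendsto' hlim fun n => hiter n j t ht

end Comparison

section MeanField

variable {f : ℝ → ℝ} {K : NNReal} {s : Set ℝ} {a b lam mu : ℝ}

theorem sub_le_mul_of_monotoneOn_of_lipschitzOnWith (hmono : MonotoneOn f s)
    (hlip : LipschitzOnWith K f s) {x y p : ℝ} (hx : x ∈ s) (hy : y ∈ s) (hp : 0 ≤ p)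
    (hxy : x - y ≤ p) : f x - f y ≤ K * p := by
  rcases le_total x y with h | h
  · exact (sub_nonpos.2 (hmono hx hy h)).trans (by positivity)
  · calc f x - f y ≤ dist (f x) (f y) := le_abs_self _
      _ ≤ K * dist x y := hlip.dist_le_mul x hx y hy
      _ ≤ K * p := by
        rw [Real.dist_eq, abs_of_nonneg (sub_nonneg.2 h)]
        gcongr

/-- The right-hand side of the mean-field equation for `u_{j+1}`, with arrival function `f`,
arrival rate `lam` and departure rate `mu`. The index is shifted by one because `u_0` obeys no
equation. -/
def mfDrift (f : ℝ → ℝ) (lam mu : ℝ) (u : ℕ → ℝ) (j : ℕ) : ℝ :=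
  lam * (f (u j) - f (u (j + 1))) - mu * (u (j + 1) - u (j + 2))

theorem mfDrift_sub_le (hmono : MonotoneOn f s) (hlip : LipschitzOnWith K f s)
    (hlam : 0 ≤ lam) (hmu : 0 ≤ mu) {u v : ℕ → ℝ} (hu : ∀ j, u j ∈ s) (hv : ∀ j, v j ∈ s)
    {p : ℝ} (hp : ∀ i, u i - v i ≤ p) {j : ℕ} (hj : 0 ≤ u (j + 1) - v (j + 1)) :
    mfDrift f lam mu u j - mfDrift f lam mu v j ≤ (lam * K + mu) * p := by
  have hp0 : 0 ≤ p := hj.trans (hp (j + 1))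
  have harrival_in : lam * (f (u j) - f (v j)) ≤ lam * (K * p) :=
    mul_le_mul_of_nonneg_left
      (sub_le_mul_of_monotoneOn_of_lipschitzOnWith hmono hlip (hu j) (hv j) hp0 (hp j)) hlam
  have harrival_out : 0 ≤ lam * (f (u (j + 1)) - f (v (j + 1))) :=
    mul_nonneg hlam (sub_nonneg.2 (hmono (hv _) (hu _) (sub_nonneg.1 hj)))
  have hdeparture_in : mu * (u (j + 2) - v (j + 2)) ≤ mu * p :=
    mul_le_mul_of_nonneg_left (hp (j + 2)) hmu
  have hdeparture_out : 0 ≤ mu * (u (j + 1) - v (j + 1)) := mul_nonneg hmu hj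
  unfold mfDrift
  linarith

theorem mfSol_monotone_general (hmono : MonotoneOn f (Icc a b))
    (hlip : LipschitzOnWith K f (Icc a b)) (hlam : 0 ≤ lam) (hmu : 0 ≤ mu) {u v : ℝ → ℕ → ℝ}
    (hu : ∀ t ∈ Ici (0 : ℝ), ∀ j, u t j ∈ Icc a b) (hv : ∀ t ∈ Ici (0 : ℝ), ∀ j, v t j ∈ Icc a b)
    (hu' : ∀ j, ∀ t ∈ Ici (0 : ℝ),
      HasDerivWithinAt (fun τ => u τ (j + 1)) (mfDrift f lam mu (u t) j) (Ici 0) t)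
    (hv' : ∀ j, ∀ t ∈ Ici (0 : ℝ),
      HasDerivWithinAt (fun τ => v τ (j + 1)) (mfDrift f lam mu (v t) j) (Ici 0) t)
    (hboundary : ∀ t ∈ Ici (0 : ℝ), u t 0 ≤ v t 0) (hinit : ∀ j, u 0 j ≤ v 0 j) :
    ∀ j, ∀ t ∈ Ici (0 : ℝ), u t j ≤ v t j
  | 0, t, ht => hboundary t ht
  | j + 1, t, ht => by
    have hderiv : ∀ i, ∀ x ∈ Ici (0 : ℝ), HasDerivWithinAt (fun τ => u τ (i + 1) - v τ (i + 1))
        (mfDrift f lam mu (u x) i - mfDrift f lam mu (v x) i) (Ici 0) x :=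
      fun i x hx => (hu' i x hx).sub (hv' i x hx)
    refine sub_nonpos.1 <| nonpos_of_deriv_right_le_mul_bound (C := lam * K + mu) (B := b - a)
      (d := fun i τ => u τ (i + 1) - v τ (i + 1))
      (fun i x hx => ((hderiv i x hx.1).continuousWithinAt).mono Icc_subset_Ici_self)
      (fun i x hx => (hderiv i x hx.1).mono (Ici_subset_Ici.2 hx.1))
      (fun i => sub_nonpos.2 (hinit (i + 1))) (fun x hx p hp i hpos => ?_)
      (fun i x hx => sub_le_sub (hu x hx.1 _).2 (hv x hx.1 _).1) j t (right_mem_Icc.2 ht)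
    have hle : ∀ n, u x n - v x n ≤ p
      | 0 => (sub_nonpos.2 (hboundary x hx.1)).trans (hpos.le.trans (hp i))
      | n + 1 => hp n
    exact mfDrift_sub_le hmono hlip hlam hmu (hu x hx.1) (hv x hx.1) hle hpos.le

end MeanField

section ArrivalPolynomial

open Polynomial

theorem monotoneOn_eval_of_derivative2_nonneg {p : ℝ[X]} {a b : ℝ}
    (ha : 0 ≤ (derivative p).eval a)
    (hp : ∀ x ∈ Icc a b, 0 ≤ (derivative (derivative p)).eval x) :
    MonotoneOn (fun x => p.eval x) (Icc a b) := by
  have hderiv : MonotoneOn (fun x => (derivative p).eval x) (Icc a b) :=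
    monotoneOn_of_hasDerivWithinAt_nonneg (convex_Icc a b) (derivative p).continuousOn
      (fun x _ => (derivative p).hasDerivWithinAt x _) fun x hx => hp x (interior_subset hx)
  refine monotoneOn_of_hasDerivWithinAt_nonneg (convex_Icc a b) p.continuousOn
    (fun x _ => p.hasDerivWithinAt x _) fun x hx => ?_
  have hx' : x ∈ Icc a b := interior_subset hx
  exact ha.trans (hderiv (left_mem_Icc.2 (hx'.1.trans hx'.2)) hx' hx'.1)

theorem eval_bernsteinPolynomial_nonneg (n ν : ℕ) {x : ℝ} (hx : x ∈ Icc (0 : ℝ) 1) :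
    0 ≤ (bernsteinPolynomial ℝ n ν).eval x := by
  have hx0 : 0 ≤ x := hx.1
  have hx1 : 0 ≤ 1 - x := sub_nonneg.2 hx.2
  simp only [bernsteinPolynomial, eval_mul, eval_natCast, eval_pow, eval_X, eval_sub, eval_one]
  positivity

theorem bernsteinPolynomial_add_left (R : Type*) [CommRing R] (m q : ℕ) :
    bernsteinPolynomial R (m + q) m = ∑ r ∈ Finset.range (q + 1),
      C (((m + q).choose m : R) * (q.choose r : R) * (-1) ^ r) * X ^ (m + r) := by
  rw [bernsteinPolynomial, Nat.add_sub_cancel_left, sub_eq_neg_add, add_pow, Finset.mul_sum]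
  refine Finset.sum_congr rfl fun r _ => ?_
  rw [neg_pow, one_pow]
  simp only [map_mul, map_natCast, map_pow, map_neg, map_one]
  ring

theorem add_two_choose_add_two_mul (n j : ℕ) :
    (n + 2).choose (j + 2) * ((j + 2) * (j + 1)) = (n + 2) * (n + 1) * n.choose j := by
  calc (n + 2).choose (j + 2) * ((j + 2) * (j + 1))
      = (n + 2).choose (j + 2) * (j + 2) * (j + 1) := (mul_assoc _ _ _).symm
    _ = (n + 2) * ((n + 1).choose (j + 1) * (j + 1)) := by
      rw [← Nat.add_one_mul_choose_eq (n + 1) (j + 1), mul_assoc]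
    _ = (n + 2) * (n + 1) * n.choose j := by
      rw [← Nat.add_one_mul_choose_eq n j, mul_assoc]

theorem choose_add_mul_choose (m q r : ℕ) :
    (m + q).choose (m + r) * (m + r).choose r = (m + q).choose m * q.choose r := by
  have h := Nat.choose_mul (n := m + q) (k := m + r) (s := m) (Nat.le_add_right m r)
  rwa [Nat.add_sub_cancel_left, Nat.add_sub_cancel_left, Nat.choose_symm_add (a := m) (b := r)] at h

/-- The polynomial `f^{(L,k)}` for `k < L`, in the parameters `L = m + q + 2` and `k = q + 1` and
with the sum indexed by `r = i - 1`, so that no truncated subtraction occurs. -/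
noncomputable def arrivalPoly (m q : ℕ) : ℝ[X] :=
  ∑ r ∈ Finset.range (q + 1),
    C (((m + q + 2).choose (m + r + 2) : ℝ) * ((m + r).choose r : ℝ) * (-1) ^ r) * X ^ (m + r + 2)

theorem fLk_eq_eval_arrivalPoly (m q : ℕ) (x : ℝ) :
    fLk (m + q + 2) (q + 1) x = (arrivalPoly m q).eval x := by
  simp only [fLk, arrivalPoly, eval_finsetSum, eval_mul, eval_C, eval_pow, eval_X]
  rw [← Finset.Ico_succ_right_eq_Icc, Finset.sum_Ico_eq_sum_range]
  refine Finset.sum_congr rfl fun r _ => ?_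
  rw [show m + q + 2 - (q + 1) + (1 + r) = m + r + 2 by omega, Nat.add_sub_cancel_left,
    Nat.add_sub_cancel]

theorem eval_zero_derivative_arrivalPoly (m q : ℕ) :
    (derivative (arrivalPoly m q)).eval 0 = 0 := by
  simp [arrivalPoly, eval_finsetSum]

theorem derivative2_arrivalPoly (m q : ℕ) :
    derivative (derivative (arrivalPoly m q)) =
      C (((m + q + 2) * (m + q + 1) : ℕ) : ℝ) * bernsteinPolynomial ℝ (m + q) m := by
  rw [bernsteinPolynomial_add_left, Finset.mul_sum, arrivalPoly, derivative_sum, derivative_sum]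
  refine Finset.sum_congr rfl fun r _ => ?_
  have hcoeff : ((m + q + 2).choose (m + r + 2) * ((m + r + 2) * (m + r + 1)) *
      (m + r).choose r : ℝ) = (m + q + 2) * (m + q + 1) * ((m + q).choose m * q.choose r) := by
    have h := add_two_choose_add_two_mul (m + q) (m + r)
    rw_mod_cast [h, mul_assoc _ (Nat.choose _ _), choose_add_mul_choose]
  rw [derivative_C_mul_X_pow, derivative_C_mul_X_pow, ← mul_assoc, ← C_mul]
  congr 2
  push_cast
  linear_combination (-1) ^ r * hcoeff

theorem fLk_self (k : ℕ) (x : ℝ) : fLk k k x = k * x := by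
  rcases k.eq_zero_or_pos with rfl | hk
  · simp [fLk]
  rw [fLk, Finset.sum_eq_single_of_mem 1 (Finset.mem_Icc.2 ⟨le_rfl, hk⟩)]
  · simp
  · -- The truncated factor `(i - 2).choose (i - 1)` equals `1` for `i = 1` and `0` for `i ≥ 2`.
    intro i hi hi1
    have hi' := Finset.mem_Icc.1 hi
    rw [Nat.choose_eq_zero_of_lt (show k - k + i - 2 < i - 1 by omega)]
    simp

theorem monotoneOn_fLk {L k : ℕ} (hk : 1 ≤ k) (hkL : k ≤ L) :
    MonotoneOn (fLk L k) (Icc 0 1) := by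
  rcases hkL.eq_or_lt with rfl | hlt
  · intro x _ y _ hxy
    rw [fLk_self, fLk_self]
    gcongr
  · obtain ⟨q, rfl⟩ : ∃ q, k = q + 1 := Nat.exists_eq_add_of_le' hk
    obtain ⟨m, rfl⟩ : ∃ m, L = m + q + 2 := Nat.exists_eq_add_of_le' hlt
    rw [funext (fLk_eq_eval_arrivalPoly m q)]
    refine monotoneOn_eval_of_derivative2_nonneg (eval_zero_derivative_arrivalPoly m q).ge
      fun x hx => ?_
    rw [derivative2_arrivalPoly, eval_C_mul]
    exact mul_nonneg (Nat.cast_nonneg _) (eval_bernsteinPolynomial_nonneg _ _ hx)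

theorem exists_lipschitzOnWith_fLk (L k : ℕ) {s : Set ℝ} (hs : IsCompact s) :
    ∃ K, LipschitzOnWith K (fLk L k) s := by
  have hsmooth : ContDiff ℝ 1 (fLk L k) := by
    unfold fLk
    fun_prop
  exact hsmooth.locallyLipschitz.locallyLipschitzOn.exists_lipschitzOnWith_of_compact hs

end ArrivalPolynomial

theorem InUbar.mem_Icc {u : ℕ → ℝ} (h : InUbar u) (j : ℕ) : u j ∈ Icc (0 : ℝ) 1 :=
  ⟨h.2.2 j, h.1 ▸ antitone_nat_of_succ_le h.2.1 (Nat.zero_le j)⟩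

theorem IsMFSol.hasDerivWithinAt_mfDrift {L k : ℕ} {lam : ℝ} {g : ℕ → ℝ} {u : ℝ → ℕ → ℝ}
    (h : IsMFSol L k lam g u) (j : ℕ) {t : ℝ} (ht : t ∈ Ici (0 : ℝ)) :
    HasDerivWithinAt (fun τ => u τ (j + 1)) (mfDrift (fLk L k) lam k (u t) j) (Ici 0) t :=
  h.2.2 (j + 1) (Nat.le_add_left 1 j) t ht

/-- Lemma 5.6: monotonicity of the mean-field ODE system. If two
`Ū`-valued solutions satisfy `u^{(1)}_j(0) ≥ u^{(2)}_j(0)` for all `j`, then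
`u^{(1)}_j(t) ≥ u^{(2)}_j(t)` for all `j ≥ 0` and `t ≥ 0`. -/
theorem mfSol_monotone (L k : ℕ) (hk : 1 ≤ k) (hkL : k ≤ L)
    (lam : ℝ) (hlam : 0 < lam) (g1 g2 : ℕ → ℝ) (u1 u2 : ℝ → ℕ → ℝ)
    (hu1 : IsMFSol L k lam g1 u1) (hu2 : IsMFSol L k lam g2 u2)
    (hinit : ∀ j, u2 0 j ≤ u1 0 j) :
    ∀ j : ℕ, ∀ t ∈ Set.Ici (0 : ℝ), u2 t j ≤ u1 t j := by
  obtain ⟨K, hlip⟩ := exists_lipschitzOnWith_fLk L k (isCompact_Icc (a := 0) (b := 1))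
  exact mfSol_monotone_general (monotoneOn_fLk hk hkL) hlip hlam.le (Nat.cast_nonneg k)
    (fun t ht j => (hu2.2.1 t ht).mem_Icc j) (fun t ht j => (hu1.2.1 t ht).mem_Icc j)
    (fun j _ ht => hu2.hasDerivWithinAt_mfDrift j ht)
    (fun j _ ht => hu1.hasDerivWithinAt_mfDrift j ht)
    (fun t ht => ((hu2.2.1 t ht).1.trans (hu1.2.1 t ht).1.symm).le) hinit
end
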